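/- Let G be a group acting on a nontrivial commutative ring A by ring automorphisms. Assume: (A) for all G-stable ideals a, b of A, rad_G(a) ⊆ rad_G(b) if and only if rad(a) ⊆ rad(b); and (B) for every G-stable ideal a of A, rad_G(a) is a G-prime if and only if rad(a) is a prime ideal. Then the map p ↦ rad(p) is a bijection from the set of minimal G-primes of A onto the set of minimal prime ideals of A, with inverse q ↦ ⋂_{g∈G} g•q. -/

import Mathlib

/-!
For a `G`-stable ideal `a`, the ordinary radical `rad a` is `G`-stable and contained in its own
`G`-radical, so (A), applied to `rad a` and `a`, gives `rad a ≤ rad_G a`. A `G`-prime `p` satisfies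
`rad_G p = p`; hence `p` is radical, and by (B) it is prime
(`isPrime_of_isGPrime`).

For any prime `q`, the ideal `⋂ g • q` is a `G`-prime contained in `q` (`isGPrime_core`), hence
prime. Thus every prime contains a `G`-stable prime, which forces minimal primes to be `G`-stable
and the minimal primes and the minimal `G`-primes to coincide (`minGPrimes_eq_minPrimes`). On
`G`-stable primes both `p ↦ rad p` and `q ↦ ⋂ g • q` are the identity, so the claim follows.
-/

/-- An ideal of `A` is `G`-stable if it is preserved by the action of every `g : G`. -/
def IsGStableIdeal (G : Type*) {A : Type*} [Group G] [CommRing A] [MulSemiringAction G A]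
    (I : Ideal A) : Prop :=
  ∀ g : G, ∀ x ∈ I, g • x ∈ I

/-- A `G`-prime of `A` is a proper `G`-stable ideal `p` such that for all `G`-stable ideals
`a`, `b`, `a * b ⊆ p` implies `a ⊆ p` or `b ⊆ p`. -/
def IsGPrime (G : Type*) {A : Type*} [Group G] [CommRing A] [MulSemiringAction G A]
    (p : Ideal A) : Prop :=
  p ≠ ⊤ ∧ IsGStableIdeal G p ∧
    ∀ a b : Ideal A, IsGStableIdeal G a → IsGStableIdeal G b → a * b ≤ p → a ≤ p ∨ b ≤ p

/-- The `G`-radical of a `G`-stable ideal `a`: the sum of all `G`-stable ideals `c`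
with `c ^ n ⊆ a` for some `n ≥ 1`. -/
def gRadical (G : Type*) {A : Type*} [Group G] [CommRing A] [MulSemiringAction G A]
    (a : Ideal A) : Ideal A :=
  sSup {c : Ideal A | IsGStableIdeal G c ∧ ∃ n ≥ 1, c ^ n ≤ a}

/-- The set of minimal `G`-primes of `A`. -/
def minGPrimes (G A : Type*) [Group G] [CommRing A] [MulSemiringAction G A] : Set (Ideal A) :=
  {p | IsGPrime G p ∧ ∀ q : Ideal A, IsGPrime G q → q ≤ p → q = p}

/-- The set of minimal primes of `A`. -/
def minPrimes (A : Type*) [CommRing A] : Set (Ideal A) :=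
  {q | q.IsPrime ∧ ∀ q' : Ideal A, q'.IsPrime → q' ≤ q → q' = q}

section

variable {G A : Type*} [Group G] [CommRing A] [MulSemiringAction G A]

open scoped Pointwise in
/-- Membership in the core `⋂ g • q` of `q`, the largest `G`-stable ideal contained in `q`. -/
theorem mem_core_iff (q : Ideal A) (x : A) :
    x ∈ (⨅ g : G, q.map (MulSemiringAction.toRingHom G A g)) ↔ ∀ g : G, g • x ∈ q := by
  have h : ∀ g : G, x ∈ q.map (MulSemiringAction.toRingHom G A g) ↔ g⁻¹ • x ∈ q := fun g =>
    Ideal.mem_pointwise_smul_iff_inv_smul_mem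
  simp only [Ideal.mem_iInf, h]
  exact ⟨fun H g => by simpa using H g⁻¹, fun H g => H g⁻¹⟩

theorem core_le (q : Ideal A) : (⨅ g : G, q.map (MulSemiringAction.toRingHom G A g)) ≤ q :=
  fun x hx => by simpa using (mem_core_iff q x).1 hx 1

theorem core_eq_of_stable {q : Ideal A} (hq : IsGStableIdeal G q) :
    (⨅ g : G, q.map (MulSemiringAction.toRingHom G A g)) = q :=
  le_antisymm (core_le q) fun x hx => (mem_core_iff q x).2 fun g => hq g x hx

theorem core_stable (q : Ideal A) :
    IsGStableIdeal G (⨅ g : G, q.map (MulSemiringAction.toRingHom G A g)) := by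
  intro g x hx
  rw [mem_core_iff] at hx ⊢
  intro h
  rw [← mul_smul]
  exact hx _

/-- This holds for every prime `q`, without assuming (A) or (B). -/
theorem isGPrime_core {q : Ideal A} (hq : q.IsPrime) :
    IsGPrime G (⨅ g : G, q.map (MulSemiringAction.toRingHom G A g)) := by
  refine ⟨fun h => hq.ne_top (top_le_iff.1 (h ▸ core_le q)), core_stable q, ?_⟩
  intro a b ha hb hab
  -- A `G`-stable ideal contained in `q` is contained in every translate of `q`.
  have key : ∀ c : Ideal A, IsGStableIdeal G c → c ≤ q →
      c ≤ ⨅ g : G, q.map (MulSemiringAction.toRingHom G A g) :=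
    fun c hc hcq x hx => (mem_core_iff q x).2 fun g => hcq (hc g x hx)
  exact (hq.mul_le.1 (hab.trans (core_le q))).imp (key a ha) (key b hb)

theorem radical_stable {a : Ideal A} (ha : IsGStableIdeal G a) : IsGStableIdeal G a.radical := by
  rintro g x ⟨n, hn⟩
  exact ⟨n, by simpa only [smul_pow'] using ha g _ hn⟩

theorem le_gRadical {a : Ideal A} (ha : IsGStableIdeal G a) : a ≤ gRadical G a :=
  le_sSup ⟨ha, 1, le_rfl, by simp⟩

theorem IsGPrime.le_of_pow_le {p c : Ideal A} (hp : IsGPrime G p) (hc : IsGStableIdeal G c)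
    (n : ℕ) (h : c ^ n ≤ p) : c ≤ p := by
  induction n with
  | zero => exact absurd (top_le_iff.1 (by simpa using h)) hp.1
  | succ n ih =>
    have hst : ∀ m : ℕ, IsGStableIdeal G (c ^ m) := by
      intro m g x hx
      have hmap : (c ^ m).map (MulSemiringAction.toRingHom G A g) ≤ c ^ m := by
        rw [Ideal.map_pow]
        have h1 : c.map (MulSemiringAction.toRingHom G A g) ≤ c :=
          Ideal.map_le_iff_le_comap.2 fun y hy => Ideal.mem_comap.2 (hc g y hy)
        exact Ideal.pow_right_mono h1 m
      exact hmap (Ideal.mem_map_of_mem _ hx)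
    rw [pow_succ] at h
    exact (hp.2.2 _ _ (hst n) hc h).elim ih id

theorem IsGPrime.gRadical_eq {p : Ideal A} (hp : IsGPrime G p) : gRadical G p = p :=
  le_antisymm (sSup_le fun _ ⟨hc, n, _, hn⟩ => hp.le_of_pow_le hc n hn) (le_gRadical hp.2.1)

/-- Under (A) and (B), a `G`-prime is an ordinary prime: (A) makes it radical, and then (B)
applies. -/
theorem isPrime_of_isGPrime
    (hA : ∀ a b : Ideal A, IsGStableIdeal G a → IsGStableIdeal G b →
      (gRadical G a ≤ gRadical G b ↔ a.radical ≤ b.radical))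
    (hB : ∀ a : Ideal A, IsGStableIdeal G a →
      (IsGPrime G (gRadical G a) ↔ a.radical.IsPrime))
    {p : Ideal A} (hp : IsGPrime G p) : p.IsPrime := by
  have hr := radical_stable hp.2.1
  have h : gRadical G p.radical ≤ gRadical G p :=
    (hA _ _ hr hp.2.1).2 (Ideal.radical_idem p).le
  have hle : p.radical ≤ p := ((le_gRadical hr).trans h).trans hp.gRadical_eq.le
  have hprime : p.radical.IsPrime := (hB p hp.2.1).1 (by rwa [hp.gRadical_eq])
  rwa [le_antisymm hle Ideal.le_radical] at hprime

/-- If `G`-primes are prime, then `⋂ g • q` is a prime below `q`, so it equals a minimal `q`. -/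
theorem stable_of_mem_minPrimes (hP : ∀ p : Ideal A, IsGPrime G p → p.IsPrime)
    {q : Ideal A} (hq : q ∈ minPrimes A) : IsGStableIdeal G q := by
  have h := hq.2 _ (hP _ (isGPrime_core (G := G) hq.1)) (core_le q)
  exact h ▸ core_stable q

theorem minGPrimes_eq_minPrimes (hP : ∀ p : Ideal A, IsGPrime G p → p.IsPrime) :
    minGPrimes G A = minPrimes A := by
  ext q
  constructor
  · rintro ⟨hq, hmin⟩
    refine ⟨hP q hq, fun q' hq' hle => le_antisymm hle ?_⟩
    exact (hmin _ (isGPrime_core hq') ((core_le q').trans hle)).symm.le.trans (core_le q')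
  · intro hq
    refine ⟨?_, fun p hp hle => hq.2 p (hP p hp) hle⟩
    have h := isGPrime_core (G := G) hq.1
    rwa [core_eq_of_stable (stable_of_mem_minPrimes hP hq)] at h

end

/-- Under properties (A) and (B), the map `p ↦ rad(p)` is a bijection from the minimal
`G`-primes of `A` to the minimal primes of `A`, with inverse `q ↦ ⋂_{g ∈ G} g • q`. -/
theorem minGPrimes_bijOn_minPrimes {G A : Type*} [Group G] [CommRing A] [MulSemiringAction G A]
    [Nontrivial A]
    (hA : ∀ a b : Ideal A, IsGStableIdeal G a → IsGStableIdeal G b →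
      (gRadical G a ≤ gRadical G b ↔ a.radical ≤ b.radical))
    (hB : ∀ a : Ideal A, IsGStableIdeal G a →
      (IsGPrime G (gRadical G a) ↔ a.radical.IsPrime)) :
    Set.BijOn (fun p : Ideal A => p.radical) (minGPrimes G A) (minPrimes A) ∧
    (∀ p ∈ minGPrimes G A,
      (⨅ g : G, p.radical.map (MulSemiringAction.toRingHom G A g)) = p) ∧
    (∀ q ∈ minPrimes A,
      (⨅ g : G, q.map (MulSemiringAction.toRingHom G A g)).radical = q) := by
  have hP : ∀ p : Ideal A, IsGPrime G p → p.IsPrime := fun p hp => isPrime_of_isGPrime hA hB hp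
  have hst : ∀ q ∈ minPrimes A, IsGStableIdeal G q := fun q hq => stable_of_mem_minPrimes hP hq
  rw [minGPrimes_eq_minPrimes hP]
  have hrad : ∀ q ∈ minPrimes A, q.radical = q := fun q hq => hq.1.radical
  refine ⟨(Set.bijOn_id _).congr fun q hq => (hrad q hq).symm, fun p hp => ?_, fun q hq => ?_⟩
  · rw [hrad p hp, core_eq_of_stable (hst p hp)]
  · rw [core_eq_of_stable (hst q hq), hrad q hq]
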